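/- Let f: ℝ^d → ℝ be differentiable with a global minimizer x*, μ-strongly quasi-convex with μ > 0, and let (g(x))_{x∈ℝ^d} be a stochastic gradient family such that (f, (g(x))) is L-λ(σ²) smooth with L > 0 and λ ≥ 0; set σ_v² = inf_x E‖g(x) − ∇f(x)‖². For any x ∈ ℝ^d, any integer m ≥ 1, and any step-size 0 < α ≤ 1/L, letting avg_m(x) be the average of m i.i.d. copies of g(x): E‖x − α·avg_m(x) − x*‖² ≤ [1 − (μ − λ/L)·α − μ²·α·(1/L − α)]·‖x − x*‖² + (α/L)·(σ² − σ_v²) + α²σ_v²/m. -/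

import Mathlib

open MeasureTheory ProbabilityTheory RealInnerProductSpace

/-!
Write `u = x - x*` and `V = E‖g(x) - ∇f(x)‖²`. The bias-variance decomposition splits the expected
squared distance after one step into `‖u - α ∇f(x)‖² + α² V / m`. Expanding the square, strong
quasi-convexity bounds `-2α ⟪∇f(x), u⟫` by `-αμ ‖u‖² - 2α (f(x) - f(x*))`, and `α/L` times the
smoothness inequality bounds `-2α (f(x) - f(x*))` by
`-(α/L) (‖∇f(x)‖² + V - λ ‖u‖² - σ²)`. What is left of the gradient is `-α (1/L - α) ‖∇f(x)‖²`,
which is nonpositive because `α ≤ 1/L` and is estimated by `μ ‖u‖ ≤ ‖∇f(x)‖`. The latter follows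
from the quadratic growth of `f`, which holds because `t ↦ (f(x* + t u) - f(x*)) / t - (μ/2) ‖u‖² t`
is nondecreasing on `t > 0`. The total coefficient of `V` is `α²/m - α/L ≤ 0`, so `V` may be
replaced by its lower bound `σ_v²`.
-/

section TotalVariance

variable {Ω E ι : Type*} [MeasurableSpace Ω] {P : Measure Ω} [NormedAddCommGroup E]
  [InnerProductSpace ℝ E]

/-- The variance `E‖X - E X‖²` of a random vector `X`, that is, the trace of its covariance
operator. As it is a Bochner integral, it is meaningful only for square-integrable `X`. -/
noncomputable def totalVariance (X : Ω → E) (P : Measure Ω) : ℝ :=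
  ∫ ω, ‖X ω - P[X]‖ ^ 2 ∂P

lemma iInf_totalVariance_le (X : ι → Ω → E) (i : ι) :
    ⨅ j, totalVariance (X j) P ≤ totalVariance (X i) P :=
  ciInf_le ⟨0, Set.forall_mem_range.2 fun _ => integral_nonneg fun _ => sq_nonneg _⟩ i

lemma totalVariance_const_smul (c : ℝ) (X : Ω → E) :
    totalVariance (fun ω => c • X ω) P = c ^ 2 * totalVariance X P := by
  simp only [totalVariance, integral_smul, ← smul_sub, norm_smul, mul_pow, Real.norm_eq_abs,
    sq_abs, integral_const_mul]

lemma totalVariance_eq_of_identDistrib [MeasurableSpace E] [BorelSpace E] {Ω' : Type*}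
    [MeasurableSpace Ω'] {Q : Measure Ω'} {X : Ω → E} {Z : Ω' → E} (h : IdentDistrib X Z P Q) :
    totalVariance X P = totalVariance Z Q := by
  have hmeas : Measurable fun v : E => ‖v - Q[Z]‖ ^ 2 := by fun_prop
  rw [totalVariance, h.integral_eq]
  exact (h.comp hmeas).integral_eq

lemma integrable_inner_of_memLp_two {X Y : Ω → E} (hX : MemLp X 2 P) (hY : MemLp Y 2 P) :
    Integrable (fun ω => ⟪X ω, Y ω⟫) P :=
  memLp_one_iff_integrable.1 ((innerSL ℝ).memLp_of_bilin 1 hX hY)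

lemma integral_norm_sum_sq_of_pairwise_orthogonal {s : Finset ι} {X : ι → Ω → E}
    (hX : ∀ i ∈ s, MemLp (X i) 2 P)
    (horth : (s : Set ι).Pairwise fun i j => ∫ ω, ⟪X i ω, X j ω⟫ ∂P = 0) :
    ∫ ω, ‖∑ i ∈ s, X i ω‖ ^ 2 ∂P = ∑ i ∈ s, ∫ ω, ‖X i ω‖ ^ 2 ∂P := by
  have hint : ∀ i ∈ s, ∀ j ∈ s, Integrable (fun ω => ⟪X i ω, X j ω⟫) P := fun i hi j hj =>
    integrable_inner_of_memLp_two (hX i hi) (hX j hj)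
  simp only [← real_inner_self_eq_norm_sq, sum_inner, inner_sum]
  rw [integral_finsetSum s fun j hj => integrable_finsetSum s fun i hi => hint i hi j hj]
  refine Finset.sum_congr rfl fun j hj => ?_
  rw [integral_finsetSum s fun i hi => hint i hi j hj]
  exact Finset.sum_eq_single_of_mem j hj fun i hi hij => horth hi hj hij

variable [CompleteSpace E]

lemma integral_sub_integral_eq_zero [IsProbabilityMeasure P] {X : Ω → E} (hX : Integrable X P) :
    ∫ ω, (X ω - P[X]) ∂P = 0 := by
  rw [integral_sub hX (integrable_const _), integral_const, probReal_univ, one_smul, sub_self]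

lemma integral_norm_sub_sq_eq_totalVariance_add [IsProbabilityMeasure P] {X : Ω → E}
    (hX : MemLp X 2 P) (c : E) :
    ∫ ω, ‖X ω - c‖ ^ 2 ∂P = totalVariance X P + ‖P[X] - c‖ ^ 2 := by
  have hcentered : MemLp (fun ω => X ω - P[X]) 2 P := hX.sub (memLp_const _)
  have hcentered_int : Integrable (fun ω => X ω - P[X]) P := hcentered.integrable one_le_two
  have hsq : Integrable (fun ω => ‖X ω - P[X]‖ ^ 2) P := hcentered.integrable_norm_pow two_ne_zero
  have hcross : Integrable (fun ω => 2 * ⟪P[X] - c, X ω - P[X]⟫) P :=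
    (hcentered_int.const_inner _).const_mul 2
  have hcross_zero : ∫ ω, 2 * ⟪P[X] - c, X ω - P[X]⟫ ∂P = 0 := by
    rw [integral_const_mul, integral_inner hcentered_int,
      integral_sub_integral_eq_zero (hX.integrable one_le_two), inner_zero_right, mul_zero]
  have hexpand : ∀ ω, ‖X ω - c‖ ^ 2
      = ‖X ω - P[X]‖ ^ 2 + 2 * ⟪P[X] - c, X ω - P[X]⟫ + ‖P[X] - c‖ ^ 2 := fun ω => by
    rw [← sub_add_sub_cancel (X ω) P[X] c, norm_add_sq_real, real_inner_comm]
  simp only [hexpand]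
  rw [integral_add (hsq.fun_add hcross) (integrable_const _), integral_add hsq hcross,
    hcross_zero, add_zero, integral_const, probReal_univ, one_smul, totalVariance]

lemma integral_norm_sq_eq_totalVariance_add [IsProbabilityMeasure P] {X : Ω → E}
    (hX : MemLp X 2 P) : ∫ ω, ‖X ω‖ ^ 2 ∂P = totalVariance X P + ‖P[X]‖ ^ 2 := by
  simpa only [sub_zero] using integral_norm_sub_sq_eq_totalVariance_add hX 0

lemma integral_norm_sub_smul_sub_sq [IsProbabilityMeasure P] {Y : Ω → E} (hY : MemLp Y 2 P)
    (x a : E) (α : ℝ) :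
    ∫ ω, ‖x - α • Y ω - a‖ ^ 2 ∂P
      = ‖x - α • P[Y] - a‖ ^ 2 + α ^ 2 * totalVariance Y P := by
  have hflip : ∀ y : E, ‖x - α • y - a‖ = ‖α • y - (x - a)‖ := fun y => by
    rw [sub_right_comm, norm_sub_rev]
  have hsmul : MemLp (fun ω => α • Y ω) 2 P := hY.const_smul α
  simp only [hflip]
  rw [integral_norm_sub_sq_eq_totalVariance_add hsmul, totalVariance_const_smul,
    integral_smul, add_comm]

variable [MeasurableSpace E] [BorelSpace E]

lemma integral_inner_sub_integral_eq_zero_of_indepFun [IsProbabilityMeasure P] {X Y : Ω → E}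
    (hX : Integrable X P) (hY : Integrable Y P) (hindep : X ⟂ᵢ[P] Y) :
    ∫ ω, ⟪X ω - P[X], Y ω - P[Y]⟫ ∂P = 0 := by
  have hmeas : ∀ c : E, Measurable fun v => v - c := fun c => by fun_prop
  have hcentered : (fun ω => X ω - P[X]) ⟂ᵢ[P] fun ω => Y ω - P[Y] :=
    hindep.comp (hmeas _) (hmeas _)
  calc ∫ ω, ⟪X ω - P[X], Y ω - P[Y]⟫ ∂P
      = ⟪∫ ω, (X ω - P[X]) ∂P, ∫ ω, (Y ω - P[Y]) ∂P⟫ :=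
        hcentered.integral_bilin (hX.sub (integrable_const _)) (hY.sub (integrable_const _))
          (innerSL ℝ)
    _ = 0 := by rw [integral_sub_integral_eq_zero hX, inner_zero_left]

lemma totalVariance_sum_of_pairwise_indepFun [IsProbabilityMeasure P] {s : Finset ι}
    {X : ι → Ω → E} (hX : ∀ i ∈ s, MemLp (X i) 2 P)
    (hindep : (s : Set ι).Pairwise fun i j => X i ⟂ᵢ[P] X j) :
    totalVariance (fun ω => ∑ i ∈ s, X i ω) P = ∑ i ∈ s, totalVariance (X i) P := by
  have hint : ∀ i ∈ s, Integrable (X i) P := fun i hi => (hX i hi).integrable one_le_two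
  have hcentered : ∀ i ∈ s, MemLp (fun ω => X i ω - P[X i]) 2 P := fun i hi =>
    (hX i hi).sub (memLp_const _)
  have horth : (s : Set ι).Pairwise fun i j =>
      ∫ ω, ⟪X i ω - P[X i], X j ω - P[X j]⟫ ∂P = 0 := fun i hi j hj hij =>
    integral_inner_sub_integral_eq_zero_of_indepFun (hint i hi) (hint j hj) (hindep hi hj hij)
  simp only [totalVariance, integral_finsetSum s hint, ← Finset.sum_sub_distrib]
  exact integral_norm_sum_sq_of_pairwise_orthogonal hcentered horth

end TotalVariance

section Average

variable {Ω Ω' E ι : Type*} [MeasurableSpace Ω] {P : Measure Ω} [MeasurableSpace Ω']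
  {Q : Measure Ω'} [NormedAddCommGroup E] [InnerProductSpace ℝ E] [MeasurableSpace E]
  [BorelSpace E] [Fintype ι] [Nonempty ι] {X : ι → Ω → E} {Z : Ω' → E}

lemma integral_average_of_identDistrib (hident : ∀ i, IdentDistrib (X i) Z P Q)
    (hZ : Integrable Z Q) :
    ∫ ω, (Fintype.card ι : ℝ)⁻¹ • ∑ i, X i ω ∂P = Q[Z] := by
  have hX : ∀ i, Integrable (X i) P := fun i => (hident i).integrable_iff.2 hZ
  rw [integral_smul, integral_finsetSum _ fun i _ => hX i]
  simp only [fun i => (hident i).integral_eq, Finset.sum_const, Finset.card_univ]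
  rw [← Nat.cast_smul_eq_nsmul ℝ, inv_smul_smul₀ (Nat.cast_ne_zero.2 Fintype.card_ne_zero)]

lemma totalVariance_average_of_identDistrib [CompleteSpace E] [IsProbabilityMeasure P]
    (hindep : Pairwise fun i j => X i ⟂ᵢ[P] X j) (hident : ∀ i, IdentDistrib (X i) Z P Q)
    (hZ : MemLp Z 2 Q) :
    totalVariance (fun ω => (Fintype.card ι : ℝ)⁻¹ • ∑ i, X i ω) P
      = totalVariance Z Q / Fintype.card ι := by
  have hX : ∀ i ∈ Finset.univ, MemLp (X i) 2 P := fun i _ => (hident i).memLp_iff.2 hZ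
  rw [totalVariance_const_smul, totalVariance_sum_of_pairwise_indepFun hX (hindep.set_pairwise _)]
  simp only [fun i => totalVariance_eq_of_identDistrib (hident i), Finset.sum_const,
    Finset.card_univ, nsmul_eq_mul]
  field_simp

end Average

section RealFunction

variable {φ φ' : ℝ → ℝ} {k : ℝ}

lemma monotoneOn_div_sub_mul_of_add_mul_sq_le_mul_deriv
    (hφ : ∀ t, 0 < t → HasDerivAt φ (φ' t) t) (hk : ∀ t, 0 < t → φ t + k * t ^ 2 ≤ t * φ' t) :
    MonotoneOn (fun t => φ t / t - k * t) (Set.Ioi 0) := by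
  have hderiv : ∀ t, 0 < t → HasDerivAt (fun t => φ t / t - k * t)
      ((φ' t * t - φ t * 1) / t ^ 2 - k * 1) t := fun t ht =>
    ((hφ t ht).div (hasDerivAt_id t) ht.ne').sub ((hasDerivAt_id t).const_mul k)
  refine monotoneOn_of_hasDerivWithinAt_nonneg (convex_Ioi 0)
    (fun t ht => (hderiv t ht).continuousAt.continuousWithinAt)
    (fun t ht => (hderiv t (interior_subset ht)).hasDerivWithinAt) fun t ht => ?_
  have ht_pos : 0 < t := interior_subset ht
  rw [sub_nonneg, mul_one, le_div_iff₀ (by positivity)]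
  linarith [hk t ht_pos]

lemma mul_sq_le_of_add_mul_sq_le_mul_deriv
    (hφ : ∀ t, 0 < t → HasDerivAt φ (φ' t) t) (hk : ∀ t, 0 < t → φ t + k * t ^ 2 ≤ t * φ' t)
    (hnonneg : ∀ t, 0 < t → 0 ≤ φ t) {t : ℝ} (ht : 0 < t) : k * t ^ 2 ≤ φ t := by
  have hlower : ∀ s ∈ Set.Ioc 0 t, -(k * s) ≤ φ t / t - k * t := fun s hs => by
    have hmono : φ s / s - k * s ≤ φ t / t - k * t :=
      monotoneOn_div_sub_mul_of_add_mul_sq_le_mul_deriv hφ hk hs.1 ht hs.2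
    linarith [div_nonneg (hnonneg s hs.1) hs.1.le]
  have hlim : Filter.Tendsto (fun s => -(k * s)) (nhdsWithin 0 (Set.Ioi 0)) (nhds 0) := by
    have hcont : Continuous fun s => -(k * s) := by fun_prop
    simpa using (hcont.tendsto 0).mono_left nhdsWithin_le_nhds
  have hslope : k * t ≤ φ t / t :=
    sub_nonneg.1 (le_of_tendsto hlim (Filter.eventually_of_mem (Ioc_mem_nhdsGT ht) hlower))
  rwa [le_div_iff₀ ht, mul_assoc, ← sq] at hslope

end RealFunction

section StrongQuasiConvexity

variable {E : Type*} [NormedAddCommGroup E] [InnerProductSpace ℝ E] [CompleteSpace E]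

/-- `f` is `μ`-strongly quasi-convex with respect to the point `xstar`. That `xstar` minimizes `f`
is not part of the definition, and `gradient f` is Mathlib's, so the notion is meaningful for
differentiable `f`. -/
def StronglyQuasiConvex (μ : ℝ) (f : E → ℝ) (xstar : E) : Prop :=
  ∀ x, f x + ⟪gradient f x, xstar - x⟫ + μ / 2 * ‖xstar - x‖ ^ 2 ≤ f xstar

namespace StronglyQuasiConvex

variable {μ : ℝ} {f : E → ℝ} {xstar : E}

lemma sub_add_le_inner_gradient (hsqc : StronglyQuasiConvex μ f xstar) (x : E) :
    f x - f xstar + μ / 2 * ‖x - xstar‖ ^ 2 ≤ ⟪gradient f x, x - xstar⟫ := by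
  have h := hsqc x
  rw [← neg_sub x xstar, inner_neg_right, norm_neg] at h
  linarith

lemma quadratic_growth (hsqc : StronglyQuasiConvex μ f xstar) (hf : Differentiable ℝ f)
    (hmin : ∀ x, f xstar ≤ f x) (x : E) :
    μ / 2 * ‖x - xstar‖ ^ 2 ≤ f x - f xstar := by
  set u := x - xstar with hu
  have hderiv : ∀ t, 0 < t → HasDerivAt (fun t : ℝ => f (xstar + t • u) - f xstar)
      ⟪gradient f (xstar + t • u), u⟫ t := fun t _ => by
    have hline : HasDerivAt (fun t : ℝ => xstar + t • u) u t := by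
      simpa using ((hasDerivAt_id t).smul_const u).const_add xstar
    exact ((hf _).hasGradientAt.hasFDerivAt.comp_hasDerivAt t hline).sub_const (f xstar)
  have hray : ∀ t, 0 < t → f (xstar + t • u) - f xstar + μ / 2 * ‖u‖ ^ 2 * t ^ 2
      ≤ t * ⟪gradient f (xstar + t • u), u⟫ := fun t _ => by
    have h := hsqc.sub_add_le_inner_gradient (xstar + t • u)
    rw [add_sub_cancel_left, inner_smul_right, norm_smul, mul_pow, Real.norm_eq_abs, sq_abs] at h
    linarith
  have hgrowth := mul_sq_le_of_add_mul_sq_le_mul_deriv hderiv hray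
    (fun t _ => sub_nonneg.2 (hmin _)) one_pos
  simpa [hu] using hgrowth

lemma mul_norm_sub_le_norm_gradient (hsqc : StronglyQuasiConvex μ f xstar)
    (hf : Differentiable ℝ f) (hmin : ∀ x, f xstar ≤ f x) (x : E) :
    μ * ‖x - xstar‖ ≤ ‖gradient f x‖ := by
  rcases (norm_nonneg (x - xstar)).eq_or_lt with hzero | hpos
  · rw [← hzero, mul_zero]
    exact norm_nonneg _
  · refine le_of_mul_le_mul_right ?_ hpos
    calc μ * ‖x - xstar‖ * ‖x - xstar‖
        = μ / 2 * ‖x - xstar‖ ^ 2 + μ / 2 * ‖x - xstar‖ ^ 2 := by ring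
      _ ≤ f x - f xstar + μ / 2 * ‖x - xstar‖ ^ 2 := by
        gcongr
        exact hsqc.quadratic_growth hf hmin x
      _ ≤ ⟪gradient f x, x - xstar⟫ := hsqc.sub_add_le_inner_gradient x
      _ ≤ ‖gradient f x‖ * ‖x - xstar‖ := real_inner_le_norm _ _

lemma norm_sub_smul_gradient_sub_sq_le (hsqc : StronglyQuasiConvex μ f xstar)
    (hf : Differentiable ℝ f) (hmin : ∀ x, f xstar ≤ f x) (hμ : 0 ≤ μ) {L : ℝ} (hL : 0 < L)
    {lam s α : ℝ} (hα0 : 0 ≤ α) (hα : α ≤ 1 / L) {x : E}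
    (hgrad : ‖gradient f x‖ ^ 2 ≤ 2 * L * (f x - f xstar) + lam * ‖x - xstar‖ ^ 2 + s) :
    ‖x - α • gradient f x - xstar‖ ^ 2
      ≤ (1 - (μ - lam / L) * α - μ ^ 2 * α * (1 / L - α)) * ‖x - xstar‖ ^ 2 + α / L * s := by
  set g := gradient f x
  set u := x - xstar
  have hexpand : ‖x - α • g - xstar‖ ^ 2 = ‖u‖ ^ 2 - 2 * α * ⟪g, u⟫ + α ^ 2 * ‖g‖ ^ 2 := by
    rw [sub_right_comm, norm_sub_sq_real, real_inner_smul_right, real_inner_comm, norm_smul,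
      mul_pow, Real.norm_eq_abs, sq_abs]
    ring
  have hdescent : 2 * α * (f x - f xstar + μ / 2 * ‖u‖ ^ 2) ≤ 2 * α * ⟪g, u⟫ := by
    gcongr
    exact hsqc.sub_add_le_inner_gradient x
  have hgap : α / L * ‖g‖ ^ 2
      ≤ 2 * α * (f x - f xstar) + α / L * lam * ‖u‖ ^ 2 + α / L * s := by
    calc α / L * ‖g‖ ^ 2
        ≤ α / L * (2 * L * (f x - f xstar) + lam * ‖u‖ ^ 2 + s) := by gcongr
      _ = 2 * α * (f x - f xstar) + α / L * lam * ‖u‖ ^ 2 + α / L * s := by field_simp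
  have hgrad_lower : (μ * ‖u‖) ^ 2 ≤ ‖g‖ ^ 2 := by
    gcongr
    exact hsqc.mul_norm_sub_le_norm_gradient hf hmin x
  have hlower := mul_le_mul_of_nonneg_left hgrad_lower (mul_nonneg hα0 (sub_nonneg.2 hα))
  rw [hexpand]
  linear_combination hdescent + hgap + hlower

end StronglyQuasiConvex

end StrongQuasiConvexity

theorem stmt6_general {Ω Ω' E ι : Type*} [MeasurableSpace Ω] {P : Measure Ω}
    [IsProbabilityMeasure P] [MeasurableSpace Ω'] {Q : Measure Ω'} [IsProbabilityMeasure Q]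
    [NormedAddCommGroup E] [InnerProductSpace ℝ E] [CompleteSpace E] [MeasurableSpace E]
    [BorelSpace E] [Fintype ι] [Nonempty ι]
    {f : E → ℝ} (hf : Differentiable ℝ f) {xstar : E} (hmin : ∀ x, f xstar ≤ f x)
    {μ L lam σ2 : ℝ} (hμ : 0 ≤ μ) (hL : 0 < L) (hsqc : StronglyQuasiConvex μ f xstar)
    {x : E} {Z : Ω' → E} (hZ : MemLp Z 2 Q) (hmean : Q[Z] = gradient f x)
    (hsmooth : ∫ ω, ‖Z ω‖ ^ 2 ∂Q
      ≤ 2 * L * (f x - f xstar) + lam * ‖x - xstar‖ ^ 2 + σ2)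
    {σv2 : ℝ} (hσv2 : σv2 ≤ totalVariance Z Q)
    {X : ι → Ω → E} (hindep : Pairwise fun i j => X i ⟂ᵢ[P] X j)
    (hident : ∀ i, IdentDistrib (X i) Z P Q)
    {α : ℝ} (hα0 : 0 ≤ α) (hα : α ≤ 1 / L) :
    ∫ ω, ‖x - α • ((Fintype.card ι : ℝ)⁻¹ • ∑ i, X i ω) - xstar‖ ^ 2 ∂P
      ≤ (1 - (μ - lam / L) * α - μ ^ 2 * α * (1 / L - α)) * ‖x - xstar‖ ^ 2
        + α / L * (σ2 - σv2) + α ^ 2 * σv2 / Fintype.card ι := by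
  have havg : MemLp (fun ω => (Fintype.card ι : ℝ)⁻¹ • ∑ i, X i ω) 2 P :=
    (memLp_finsetSum _ fun i _ => (hident i).memLp_iff.2 hZ).const_smul _
  have hgrad : ‖gradient f x‖ ^ 2 ≤ 2 * L * (f x - f xstar) + lam * ‖x - xstar‖ ^ 2
      + (σ2 - totalVariance Z Q) := by
    rw [integral_norm_sq_eq_totalVariance_add hZ, hmean] at hsmooth
    linarith
  have hcontract := hsqc.norm_sub_smul_gradient_sub_sq_le hf hmin hμ hL hα0 hα hgrad
  have hcoef : α ^ 2 / Fintype.card ι ≤ α / L :=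
    calc α ^ 2 / Fintype.card ι ≤ α * α := by
          rw [← sq]
          exact div_le_self (sq_nonneg α) (Nat.one_le_cast.2 Fintype.card_pos)
      _ ≤ α * (1 / L) := by gcongr
      _ = α / L := mul_one_div α L
  have hvariance := mul_le_mul_of_nonneg_left hσv2 (sub_nonneg.2 hcoef)
  rw [integral_norm_sub_smul_sub_sq havg,
    integral_average_of_identDistrib hident (hZ.integrable one_le_two), hmean,
    totalVariance_average_of_identDistrib hindep hident hZ]
  linear_combination hcontract + hvariance

/-- one-step contraction inequality of the paper's Theorem 2.
Let `f` be differentiable with global minimizer `x*`, `μ`-strongly quasi-convex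
(`μ > 0`), and let `(G x)_x` be a stochastic gradient family such that `(f, G)` is
`L`-`lam(σ²)` smooth with `L > 0`, `lam ≥ 0`; `σ_v² = ⨅ x, E‖G x − ∇f x‖²`.
For any `x`, any `m ≥ 1`, and any step-size `0 < α ≤ 1/L`, letting `avg_m(x)` be the
average of `m` i.i.d. copies `h i` of `G x`:
`E‖x − α avg_m(x) − x*‖² ≤ (1 − (μ − lam/L)α − μ²α(1/L − α)) ‖x − x*‖²
  + (α/L)(σ² − σ_v²) + α²σ_v²/m`. -/
theorem stmt6 {Ω : Type*} [MeasurableSpace Ω] (P : Measure Ω) [IsProbabilityMeasure P]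
    {d : ℕ} (f : EuclideanSpace ℝ (Fin d) → ℝ) (hf : Differentiable ℝ f)
    (xstar : EuclideanSpace ℝ (Fin d)) (hmin : ∀ x, f xstar ≤ f x)
    (μ L lam σ2 : ℝ) (hμ : 0 < μ) (hL : 0 < L) (hlam : 0 ≤ lam)
    (hsqc : ∀ x, f x + ⟪gradient f x, xstar - x⟫ + μ / 2 * ‖xstar - x‖ ^ 2 ≤ f xstar)
    (G : EuclideanSpace ℝ (Fin d) → Ω → EuclideanSpace ℝ (Fin d))
    (hGmeas : ∀ x, Measurable (G x))
    (hGL2 : ∀ x, MemLp (G x) 2 P)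
    (hGmean : ∀ x, ∫ ω, G x ω ∂P = gradient f x)
    (hsmooth : ∀ x, ∫ ω, ‖G x ω‖ ^ 2 ∂P
        ≤ 2 * L * (f x - f xstar) + lam * ‖x - xstar‖ ^ 2 + σ2)
    (σv2 : ℝ) (hσv2 : σv2 = ⨅ y, ∫ ω, ‖G y ω - gradient f y‖ ^ 2 ∂P)
    (x : EuclideanSpace ℝ (Fin d)) (m : ℕ) (hm : 0 < m)
    (h : Fin m → Ω → EuclideanSpace ℝ (Fin d))
    (hmeas : ∀ i, Measurable (h i))
    (hiid : iIndepFun h P)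
    (hcopy : ∀ i, IdentDistrib (h i) (G x) P P)
    (α : ℝ) (hα0 : 0 < α) (hα : α ≤ 1 / L) :
    ∫ ω, ‖x - α • ((m : ℝ)⁻¹ • ∑ i, h i ω) - xstar‖ ^ 2 ∂P
      ≤ (1 - (μ - lam / L) * α - μ ^ 2 * α * (1 / L - α)) * ‖x - xstar‖ ^ 2
        + α / L * (σ2 - σv2) + α ^ 2 * σv2 / m := by
  have : Nonempty (Fin m) := Fin.pos_iff_nonempty.1 hm
  simp only [← hGmean] at hσv2
  simpa only [Fintype.card_fin] using stmt6_general hf hmin hμ.le hL hsqc (hGL2 x) (hGmean x)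
    (hsmooth x) (hσv2.trans_le (iInf_totalVariance_le G x)) (fun _ _ => hiid.indepFun) hcopy
    hα0.le hα
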